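/- arXiv:2003.12926 — 4 statements merged into one kernel-verified Lean document; each statement's English description precedes it below -/
import Mathlib

section
/- For every integer m ≥ 0 and every real number t with |t| < 1, (arsinh t)^{2m}/(2m)! = ∑_{n=m}^∞ (-4)^{n-m} T(n,m) · t^{2n}/(2n)!. -/
/-- Stirling numbers of the first kind with level 2. -/
def T2 : ℕ → ℕ → ℕ
  | 0, 0 => 1
  | 0, _ + 1 => 0
  | _ + 1, 0 => 0
  | n + 1, m + 1 => T2 n m + n ^ 2 * T2 n (m + 1)

/-! Substituting `t = sinh u`, the theorem says that `u ^ (2m) / (2m)! = fₘ (sinh² u)`, where `fₘ`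
is the power series with coefficients `cₘ,ₙ = (-4)^(n-m) T(n,m) / (2n)!`. The recurrence for `T`
gives `(2n+2)(2n+1) cₘ₊₁,ₙ₊₁ + 4n² cₘ₊₁,ₙ = cₘ,ₙ`. It follows that `|cₘ,ₙ| ≤ 1`, so that `fₘ`
converges on the unit disc, and that `4z(1+z) fₘ₊₁″ + (2+4z) fₘ₊₁′ = fₘ`. The left-hand side,
taken at `z = sinh² u`, is the second derivative of `u ↦ fₘ₊₁ (sinh² u)`, and integrating twice
turns `u ^ (2m) / (2m)!` into `u ^ (2m+2) / (2m+2)!`. -/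

open FormalMultilinearSeries
open scoped Nat

section PowerSeries

variable {𝕜 : Type*} [NontriviallyNormedField 𝕜] {a : ℕ → 𝕜}

lemma mem_eball_zero_one {E : Type*} [SeminormedAddCommGroup E] {x : E} :
    x ∈ Metric.eball 0 1 ↔ ‖x‖ < 1 := by
  rw [Metric.mem_eball, edist_zero_right, ← ofReal_norm, ENNReal.ofReal_lt_one]

lemma hasFPowerSeriesOnBall_ofScalarsSum_of_norm_le [CompleteSpace 𝕜] {C : ℝ}
    (ha : ∀ n, ‖a n‖ ≤ C) :
    HasFPowerSeriesOnBall (ofScalarsSum a : 𝕜 → 𝕜) (ofScalars 𝕜 a) 0 1 := by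
  have hradius : 1 ≤ (ofScalars 𝕜 a).radius :=
    (ofScalars 𝕜 a).le_radius_of_bound C (r := 1) fun n => by simpa using ha n
  exact ((ofScalars 𝕜 a).hasFPowerSeriesOnBall (one_pos.trans_le hradius)).mono one_pos hradius

lemma hasFPowerSeriesOnBall_deriv_ofScalars [CompleteSpace 𝕜] {f : 𝕜 → 𝕜} {x : 𝕜} {r : ENNReal}
    (hf : HasFPowerSeriesOnBall f (ofScalars 𝕜 a) x r) :
    HasFPowerSeriesOnBall (deriv f) (ofScalars 𝕜 fun n => (n + 1) * a (n + 1)) x r := by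
  have h := (ContinuousLinearMap.apply 𝕜 𝕜 (1 : 𝕜)).comp_hasFPowerSeriesOnBall hf.fderiv
  convert! h using 1
  ext n
  simp

lemma hasSum_natCast_mul_pow {R : Type*} [CommRing R] [TopologicalSpace R] [IsTopologicalRing R]
    {a : ℕ → R} {z s : R}
    (h : HasSum (fun n : ℕ => (n + 1) * a (n + 1) * z ^ n) s) :
    HasSum (fun n : ℕ => n * a n * z ^ n) (z * s) := by
  refine (hasSum_nat_add_iff' 1).1 ?_
  convert! h.mul_left z using 1
  · ext n
    push_cast
    ring
  · simp

/-- The operator `d²/du²` in the coordinate `z = sinh² u`, that is, with `f` standing for the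
function `u ↦ f (sinh² u)`. -/
noncomputable def sinhSqSecondDeriv (f : 𝕜 → 𝕜) (z : 𝕜) : 𝕜 :=
  4 * z * (1 + z) * deriv (deriv f) z + (2 + 4 * z) * deriv f z

lemma hasSum_sinhSqSecondDeriv [CompleteSpace 𝕜] {f : 𝕜 → 𝕜}
    {r : ENNReal} (hf : HasFPowerSeriesOnBall f (ofScalars 𝕜 a) 0 r) {z : 𝕜}
    (hz : z ∈ Metric.eball 0 r) :
    HasSum (fun n : ℕ => ((2 * n + 2) * (2 * n + 1) * a (n + 1) + 4 * n ^ 2 * a n) * z ^ n)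
      (sinhSqSecondDeriv f z) := by
  have hf' := hasFPowerSeriesOnBall_deriv_ofScalars hf
  have hf'' := hasFPowerSeriesOnBall_deriv_ofScalars hf'
  have h₁ := hf'.hasSum hz
  have h₂ := hf''.hasSum hz
  simp only [ofScalars_apply_eq, smul_eq_mul, zero_add] at h₁ h₂
  have hz₁ : HasSum (fun n : ℕ => n * a n * z ^ n) (z * deriv f z) := hasSum_natCast_mul_pow h₁
  have hz₂ : HasSum (fun n : ℕ => n * ((n + 1) * a (n + 1)) * z ^ n) (z * deriv (deriv f) z) :=
    hasSum_natCast_mul_pow h₂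
  have hzz₂ : HasSum (fun n : ℕ => n * ((n - 1) * a n) * z ^ n)
      (z * (z * deriv (deriv f) z)) :=
    hasSum_natCast_mul_pow (a := fun n => (n - 1) * a n) (hz₂.congr_fun fun n => by push_cast; ring)
  convert! (((hz₂.add hzz₂).add hz₁).mul_left 4).add (h₁.mul_left 2) using 1
  · ext n
    ring
  · rw [sinhSqSecondDeriv]
    ring

end PowerSeries

section Integration

variable {𝕜 : Type*} [RCLike 𝕜]

lemma hasDerivAt_pow_succ_div_factorial (k : ℕ) (x : 𝕜) :
    HasDerivAt (fun y : 𝕜 => y ^ (k + 1) / (k + 1)!) (x ^ k / k !) x := by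
  refine ((hasDerivAt_pow (k + 1) x).div_const _).congr_deriv ?_
  rw [Nat.factorial_succ, Nat.cast_mul, Nat.add_sub_cancel,
    mul_div_mul_left _ _ (Nat.cast_ne_zero.2 k.succ_ne_zero)]

lemma eq_pow_succ_div_factorial_of_hasDerivAt {f : 𝕜 → 𝕜} {s : Set 𝕜} {k : ℕ} (hs : IsOpen s)
    (hs' : IsPreconnected s) (h0 : 0 ∈ s) (hf : ∀ x ∈ s, HasDerivAt f (x ^ k / k !) x)
    (hf0 : f 0 = 0) :
    ∀ x ∈ s, f x = x ^ (k + 1) / (k + 1)! := by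
  have hpow := hasDerivAt_pow_succ_div_factorial (𝕜 := 𝕜) k
  exact hs.eqOn_of_deriv_eq hs' (fun x hx => (hf x hx).differentiableAt.differentiableWithinAt)
    (fun x _ => (hpow x).differentiableAt.differentiableWithinAt)
    (fun x hx => (hf x hx).deriv.trans (hpow x).deriv.symm) h0 (by simp [hf0])

end Integration

section SinhSubstitution

open Real

variable {f : ℝ → ℝ} {u : ℝ}

lemma hasDerivAt_comp_sinh_sq {f' : ℝ} (hf : HasDerivAt f f' (sinh u ^ 2)) :
    HasDerivAt (fun v => f (sinh v ^ 2)) (2 * sinh u * cosh u * f') u := by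
  refine (hf.comp u ((hasDerivAt_sinh u).pow 2)).congr_deriv ?_
  ring

lemma hasDerivAt_sinh_mul_cosh_mul_deriv (hf : DifferentiableAt ℝ (deriv f) (sinh u ^ 2)) :
    HasDerivAt (fun v => 2 * sinh v * cosh v * deriv f (sinh v ^ 2))
      (sinhSqSecondDeriv f (sinh u ^ 2)) u := by
  have h := (((hasDerivAt_sinh u).const_mul 2).mul (hasDerivAt_cosh u)).mul
    (hasDerivAt_comp_sinh_sq hf.hasDerivAt)
  refine h.congr_deriv ?_
  simp only [Pi.mul_apply, sinhSqSecondDeriv]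
  linear_combination
    (2 * deriv f (sinh u ^ 2) + 4 * sinh u ^ 2 * deriv (deriv f) (sinh u ^ 2)) * cosh_sq u

lemma comp_sinh_sq_eq_pow_div_factorial {k : ℕ}
    (hf : ∀ z, |z| < 1 → DifferentiableAt ℝ f z)
    (hf' : ∀ z, |z| < 1 → DifferentiableAt ℝ (deriv f) z) (hf0 : f 0 = 0)
    (hode : ∀ v, |sinh v| < 1 → sinhSqSecondDeriv f (sinh v ^ 2) = v ^ k / k !)
    (hu : |sinh u| < 1) :
    f (sinh u ^ 2) = u ^ (k + 2) / (k + 2)! := by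
  set s := sinh ⁻¹' Set.Ioo (-1) 1
  have hopen : IsOpen s := isOpen_Ioo.preimage continuous_sinh
  have hconn : IsPreconnected s :=
    (Set.ordConnected_Ioo.preimage_mono sinh_strictMono.monotone).isPreconnected
  have hzero : (0 : ℝ) ∈ s := by simp [s]
  have hsq : ∀ v ∈ s, |sinh v ^ 2| < 1 := fun v hv => by
    rw [abs_pow]
    exact pow_lt_one₀ (abs_nonneg _) (abs_lt.2 hv) two_ne_zero
  have hderiv : ∀ v ∈ s,
      2 * sinh v * cosh v * deriv f (sinh v ^ 2) = v ^ (k + 1) / (k + 1)! := by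
    refine eq_pow_succ_div_factorial_of_hasDerivAt hopen hconn hzero (fun v hv => ?_) (by simp)
    rw [← hode v (abs_lt.2 hv)]
    exact hasDerivAt_sinh_mul_cosh_mul_deriv (hf' _ (hsq v hv))
  refine eq_pow_succ_div_factorial_of_hasDerivAt (f := fun v => f (sinh v ^ 2)) hopen hconn hzero
    (fun v hv => ?_) (by simpa using hf0) u (abs_lt.1 hu)
  rw [← hderiv v hv]
  exact hasDerivAt_comp_sinh_sq (hf _ (hsq v hv)).hasDerivAt

end SinhSubstitution

/-- The coefficient `(-4)^(n-m) T(n,m) / (2n)!` of `t ^ (2n)` in the expansion of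
`arsinh t ^ (2m) / (2m)!`. The power of `-4` is written as a quotient to avoid a truncated
subtraction. -/
noncomputable def arsinhCoeff (m n : ℕ) : ℝ :=
  (-4) ^ n / (-4) ^ m * T2 n m / (2 * n)!

lemma T2_eq_zero_of_lt {n m : ℕ} (h : n < m) : T2 n m = 0 := by
  induction n generalizing m with
  | zero => cases m with
    | zero => omega
    | succ m => simp [T2]
  | succ n ih => cases m with
    | zero => omega
    | succ m => simp [T2, ih (show n < m by omega), ih (show n < m + 1 by omega)]

lemma arsinhCoeff_add_left (m i : ℕ) :
    arsinhCoeff m (m + i) = (-4) ^ i * T2 (m + i) m / (2 * (m + i))! := by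
  rw [arsinhCoeff, pow_add, mul_div_cancel_left₀ _ (pow_ne_zero m (by norm_num))]

lemma arsinhCoeff_eq_zero_of_lt {m n : ℕ} (h : n < m) : arsinhCoeff m n = 0 := by
  simp [arsinhCoeff, T2_eq_zero_of_lt h]

lemma arsinhCoeff_zero_succ (n : ℕ) : arsinhCoeff 0 (n + 1) = 0 := by
  simp [arsinhCoeff, T2]

lemma arsinhCoeff_recurrence (m n : ℕ) :
    (2 * n + 2) * (2 * n + 1) * arsinhCoeff (m + 1) (n + 1) + 4 * n ^ 2 * arsinhCoeff (m + 1) n =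
      arsinhCoeff m n := by
  have hfact : ((2 * (n + 1))! : ℝ) = (2 * n + 2) * ((2 * n + 1) * (2 * n)!) := by
    rw [show 2 * (n + 1) = 2 * n + 1 + 1 by ring, Nat.factorial_succ, Nat.factorial_succ]
    push_cast
    ring
  rw [arsinhCoeff, arsinhCoeff, arsinhCoeff, hfact, T2]
  push_cast
  field_simp
  ring

lemma abs_arsinhCoeff_le_one (m n : ℕ) : |arsinhCoeff m n| ≤ 1 := by
  induction n generalizing m with
  | zero => cases m <;> simp [arsinhCoeff, T2]
  | succ n ih =>
    cases m with
    | zero => simp [arsinhCoeff_zero_succ]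
    | succ m =>
      have hpos : (0 : ℝ) < (2 * n + 2) * (2 * n + 1) := by positivity
      refine le_of_mul_le_mul_left ?_ hpos
      calc (2 * n + 2) * (2 * n + 1) * |arsinhCoeff (m + 1) (n + 1)|
          = |arsinhCoeff m n - 4 * n ^ 2 * arsinhCoeff (m + 1) n| := by
            rw [← arsinhCoeff_recurrence m n, add_sub_cancel_right, abs_mul, abs_of_pos hpos]
        _ ≤ |arsinhCoeff m n| + 4 * n ^ 2 * |arsinhCoeff (m + 1) n| := by
            refine (abs_sub _ _).trans_eq ?_
            rw [abs_mul, abs_of_nonneg (by positivity : (0 : ℝ) ≤ 4 * n ^ 2)]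
        _ ≤ 1 + 4 * n ^ 2 * 1 := by gcongr <;> exact ih _
        _ ≤ (2 * n + 2) * (2 * n + 1) * 1 := by nlinarith

lemma hasFPowerSeriesOnBall_arsinhCoeff (m : ℕ) :
    HasFPowerSeriesOnBall (ofScalarsSum (arsinhCoeff m)) (ofScalars ℝ (arsinhCoeff m)) 0 1 :=
  hasFPowerSeriesOnBall_ofScalarsSum_of_norm_le (abs_arsinhCoeff_le_one m)

lemma hasSum_arsinhCoeff (m : ℕ) {z : ℝ} (hz : |z| < 1) :
    HasSum (fun n => arsinhCoeff m n * z ^ n) (ofScalarsSum (arsinhCoeff m) z) := by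
  have h := (hasFPowerSeriesOnBall_arsinhCoeff m).hasSum (mem_eball_zero_one.2 hz)
  simpa only [ofScalars_apply_eq, smul_eq_mul, zero_add] using h

lemma ofScalarsSum_arsinhCoeff_zero (z : ℝ) : ofScalarsSum (arsinhCoeff 0) z = 1 := by
  rw [ofScalars_sum_eq, tsum_eq_single 0]
  · simp [arsinhCoeff, T2]
  · intro n hn
    obtain ⟨k, rfl⟩ := Nat.exists_eq_succ_of_ne_zero hn
    simp [arsinhCoeff_zero_succ]

lemma sinhSqSecondDeriv_ofScalarsSum_arsinhCoeff_succ (m : ℕ) {z : ℝ} (hz : |z| < 1) :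
    sinhSqSecondDeriv (ofScalarsSum (arsinhCoeff (m + 1))) z = ofScalarsSum (arsinhCoeff m) z := by
  have h := hasSum_sinhSqSecondDeriv (hasFPowerSeriesOnBall_arsinhCoeff (m + 1))
    (mem_eball_zero_one.2 hz)
  simp only [arsinhCoeff_recurrence] at h
  exact h.unique (hasSum_arsinhCoeff m hz)

lemma ofScalarsSum_arsinhCoeff_sinh_sq (m : ℕ) {u : ℝ} (hu : |Real.sinh u| < 1) :
    ofScalarsSum (arsinhCoeff m) (Real.sinh u ^ 2) = u ^ (2 * m) / (2 * m)! := by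
  induction m generalizing u with
  | zero => simp [ofScalarsSum_arsinhCoeff_zero]
  | succ m ih =>
    have hf := hasFPowerSeriesOnBall_arsinhCoeff (m + 1)
    have hf' := hasFPowerSeriesOnBall_deriv_ofScalars hf
    refine comp_sinh_sq_eq_pow_div_factorial (k := 2 * m)
      (fun z hz => (hf.analyticAt_of_mem (mem_eball_zero_one.2 hz)).differentiableAt)
      (fun z hz => (hf'.analyticAt_of_mem (mem_eball_zero_one.2 hz)).differentiableAt)
      (by simp [arsinhCoeff_eq_zero_of_lt]) (fun v hv => ?_) hu
    rw [sinhSqSecondDeriv_ofScalarsSum_arsinhCoeff_succ m (by simpa using hv), ih hv]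

lemma hasSum_arsinh_pow (m : ℕ) {t : ℝ} (ht : |t| < 1) :
    HasSum (fun n => arsinhCoeff m n * t ^ (2 * n)) (Real.arsinh t ^ (2 * m) / (2 * m)!) := by
  have h := hasSum_arsinhCoeff m (z := t ^ 2) (by simpa using ht)
  have hvalue := ofScalarsSum_arsinhCoeff_sinh_sq m (u := Real.arsinh t) (by simpa using ht)
  rw [Real.sinh_arsinh] at hvalue
  simpa only [hvalue, ← pow_mul] using h

/-- `(arsinh t)^{2m}/(2m)! = ∑_{n=m}^∞ (-4)^{n-m} T(n,m) t^{2n}/(2n)!`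
(the sum over `n ≥ m` is written via the substitution `n = m + i`). -/
theorem statement11 (m : ℕ) (t : ℝ) (ht : |t| < 1) :
    (Real.arsinh t) ^ (2 * m) / (Nat.factorial (2 * m) : ℝ) =
    ∑' i : ℕ, (-4 : ℝ) ^ i * (T2 (m + i) m : ℝ) *
        t ^ (2 * (m + i)) / (Nat.factorial (2 * (m + i)) : ℝ) := by
  have hinitial : ∑ n ∈ Finset.range m, arsinhCoeff m n * t ^ (2 * n) = 0 :=
    Finset.sum_eq_zero fun n hn => by
      rw [arsinhCoeff_eq_zero_of_lt (Finset.mem_range.1 hn), zero_mul]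
  have htail := (hasSum_nat_add_iff' m).2 (hasSum_arsinh_pow m ht)
  rw [hinitial, sub_zero] at htail
  refine htail.tsum_eq.symm.trans (tsum_congr fun i => ?_)
  rw [add_comm i m, arsinhCoeff_add_left, div_mul_eq_mul_div]
end

section
/- Let L(t) = t/arsinh(t) for real t ≠ 0. Then for every real t ≠ 0, L(t)³ = (1 + t²/2)·L(t) − (t + t³/2)·L'(t) + (t²(1+t²)/2)·L''(t). -/
/-- `L t = t / arsinh t`. -/
noncomputable def Lfun : ℝ → ℝ := fun t => t / Real.arsinh t

/-!
In the variable `x = arsinh t` the operator `(1 + t²) d²/dt² + t d/dt` is just `d²/dx²`. Since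
`(1 / x)'' = 2 / x³`, the function `g = 1 / arsinh` satisfies `(1 + t²) g'' + t g' = 2 g³`.
The theorem is this equation multiplied by `t³ / 2` and rewritten in terms of `L = t g`.
-/

open Real

theorem one_add_sq_mul_deriv_arsinh_sq (t : ℝ) : (1 + t ^ 2) * deriv arsinh t ^ 2 = 1 := by
  have h_pos : 0 < 1 + t ^ 2 := by positivity
  rw [(hasDerivAt_arsinh t).deriv, inv_pow, sq_sqrt h_pos.le, mul_inv_cancel₀ h_pos.ne']

theorem one_add_sq_mul_iteratedDeriv_two_arsinh (t : ℝ) :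
    (1 + t ^ 2) * iteratedDeriv 2 arsinh t + t * deriv arsinh t = 0 := by
  have h_const : (fun x ↦ (1 + x ^ 2) * deriv arsinh x ^ 2) = fun _ ↦ 1 :=
    funext one_add_sq_mul_deriv_arsinh_sq
  have h_deriv_ne : deriv arsinh t ≠ 0 := by
    rw [(hasDerivAt_arsinh t).deriv]
    positivity
  have h_snd : HasDerivAt (deriv arsinh) (iteratedDeriv 2 arsinh t) t := by
    rw [iteratedDeriv_succ, iteratedDeriv_one]
    exact (contDiff_arsinh.differentiable_deriv_two t).hasDerivAt
  have h_diff := (((hasDerivAt_id' t).fun_pow 2).const_add 1).fun_mul (h_snd.fun_pow 2)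
  rw [h_const] at h_diff
  have h_zero := h_diff.unique (hasDerivAt_const t 1)
  refine (mul_eq_zero.mp ?_).resolve_left (mul_ne_zero two_ne_zero h_deriv_ne)
  linear_combination h_zero

theorem one_add_sq_smul_iteratedDeriv_two_comp_arsinh {E : Type*} [NormedAddCommGroup E]
    [NormedSpace ℝ E] {f : ℝ → E} {t : ℝ} (hf : ContDiffAt ℝ 2 f (arsinh t)) :
    (1 + t ^ 2) • iteratedDeriv 2 (f ∘ arsinh) t + t • deriv (f ∘ arsinh) t =
      iteratedDeriv 2 f (arsinh t) := by
  rw [iteratedDeriv_scomp_two hf contDiff_arsinh.contDiffAt,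
    deriv.scomp t (hf.differentiableAt two_ne_zero) (differentiable_arsinh t)]
  calc
    _ = ((1 + t ^ 2) * deriv arsinh t ^ 2) • iteratedDeriv 2 f (arsinh t) +
        ((1 + t ^ 2) * iteratedDeriv 2 arsinh t + t * deriv arsinh t) • deriv f (arsinh t) := by
      module
    _ = iteratedDeriv 2 f (arsinh t) := by
      rw [one_add_sq_mul_deriv_arsinh_sq, one_add_sq_mul_iteratedDeriv_two_arsinh, one_smul,
        zero_smul, add_zero]

theorem iteratedDeriv_two_inv {𝕜 : Type*} [NontriviallyNormedField 𝕜] (x : 𝕜) :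
    iteratedDeriv 2 Inv.inv x = 2 * x⁻¹ ^ 3 := by
  rw [iteratedDeriv_eq_iterate, iter_deriv_inv]
  simp [zpow_neg]

theorem one_add_sq_mul_iteratedDeriv_two_inv_comp_arsinh {t : ℝ} (ht : t ≠ 0) :
    (1 + t ^ 2) * iteratedDeriv 2 (Inv.inv ∘ arsinh) t + t * deriv (Inv.inv ∘ arsinh) t =
      2 * (arsinh t)⁻¹ ^ 3 := by
  rw [← iteratedDeriv_two_inv]
  exact one_add_sq_smul_iteratedDeriv_two_comp_arsinh
    (contDiffAt_inv ℝ (arsinh_eq_zero_iff.not.mpr ht))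

section IdMul

variable {𝕜 : Type*} [NontriviallyNormedField 𝕜] {g : 𝕜 → 𝕜} {t : 𝕜}

theorem deriv_id_mul (hg : DifferentiableAt 𝕜 g t) :
    deriv (fun x ↦ x * g x) t = g t + t * deriv g t := by
  rw [deriv_fun_mul differentiableAt_fun_id hg, deriv_id'', one_mul]

theorem iteratedDeriv_two_id_mul (hg : ContDiffAt 𝕜 2 g t) :
    iteratedDeriv 2 (fun x ↦ x * g x) t = 2 * deriv g t + t * iteratedDeriv 2 g t := by
  rw [iteratedDeriv_fun_mul contDiffAt_fun_id hg]
  simp [Finset.sum_range_succ, iteratedDeriv_fun_id, add_comm]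

end IdMul

theorem statement13 (t : ℝ) (ht : t ≠ 0) :
    Lfun t ^ 3 = (1 + t ^ 2 / 2) * Lfun t - (t + t ^ 3 / 2) * deriv Lfun t +
      t ^ 2 * (1 + t ^ 2) / 2 * iteratedDeriv 2 Lfun t := by
  set g : ℝ → ℝ := Inv.inv ∘ arsinh
  have hg : ContDiffAt ℝ 2 g t :=
    contDiff_arsinh.contDiffAt.inv (arsinh_eq_zero_iff.not.mpr ht)
  have hL : Lfun = fun x ↦ x * g x := funext fun x ↦ div_eq_mul_inv x (arsinh x)
  have h_ode : (1 + t ^ 2) * iteratedDeriv 2 g t + t * deriv g t = 2 * g t ^ 3 :=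
    one_add_sq_mul_iteratedDeriv_two_inv_comp_arsinh ht
  rw [hL, deriv_id_mul (hg.differentiableAt two_ne_zero), iteratedDeriv_two_id_mul hg]
  linear_combination -(t ^ 3 / 2) * h_ode
end

section
/- Let L(t) = t/arsinh(t) for real t ≠ 0. Then for every real t ≠ 0, L(t)⁴ = ((6+t²)√(1+t²)/6)·L(t) − (t(6+t²)√(1+t²)/6)·L'(t) + (t²√(1+t²)/2)·L''(t) − ((t³+t⁵)√(1+t²)/6)·L'''(t). -/
/-!
In the variable `a = arsinh t`, the function `h = 1 / arsinh` is `a⁻¹`, which satisfies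
`(a⁻¹)''' = -6 (a⁻¹)⁴`. Pulling `h` back along `t = sinh a`, Faà di Bruno's formula turns this into
a third-order differential equation for `h` in `t`. Since `L = t h`, multiplying the equation
by `t⁴ / 6` and rewriting the derivatives of `h` by Leibniz' rule gives the claim.
-/

open Real

theorem iteratedDeriv_three_comp_sinh {F : Type*} [NormedAddCommGroup F] [NormedSpace ℝ F]
    {h : ℝ → F} {a : ℝ} (hh : ContDiffAt ℝ 3 h (sinh a)) :
    iteratedDeriv 3 (h ∘ sinh) a =
      cosh a ^ 3 • iteratedDeriv 3 h (sinh a)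
        + (3 * sinh a * cosh a) • iteratedDeriv 2 h (sinh a)
        + cosh a • deriv h (sinh a) := by
  rw [iteratedDeriv_scomp_three hh contDiff_sinh.contDiffAt]
  simp only [iteratedDeriv_add_one_sinh, iteratedDeriv_add_one_cosh, iteratedDeriv_one,
    Real.deriv_sinh, Real.deriv_cosh]
  module

theorem iteratedDeriv_succ_fun_id_mul {𝕜 : Type*} [NontriviallyNormedField 𝕜] {n : ℕ} {h : 𝕜 → 𝕜}
    {x : 𝕜} (hh : ContDiffAt 𝕜 (n + 1 : ℕ) h x) :
    iteratedDeriv (n + 1) (fun y => y * h y) x =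
      x * iteratedDeriv (n + 1) h x + (n + 1) * iteratedDeriv n h x := by
  have higher_deriv_id (i : ℕ) : iteratedDeriv (i + 1 + 1) (fun y : 𝕜 => y) x = 0 := by
    simp [iteratedDeriv_fun_id]
  rw [iteratedDeriv_fun_mul contDiffAt_fun_id hh]
  simp only [Finset.sum_range_succ', higher_deriv_id, mul_zero, zero_mul, Finset.sum_const_zero]
  simp [iteratedDeriv_fun_id, add_comm]

theorem contDiffAt_inv_arsinh {n : WithTop ℕ∞} {t : ℝ} (ht : t ≠ 0) :
    ContDiffAt ℝ n (fun y => (arsinh y)⁻¹) t :=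
  contDiff_arsinh.contDiffAt.inv (arsinh_eq_zero_iff.not.mpr ht)

theorem iteratedDeriv_three_inv {𝕜 : Type*} [NontriviallyNormedField 𝕜] (x : 𝕜) :
    iteratedDeriv 3 Inv.inv x = -6 * x⁻¹ ^ 4 := by
  rw [iteratedDeriv_eq_iterate, iter_deriv_inv]
  norm_num [Nat.factorial]

theorem inv_arsinh_third_order_ode {t : ℝ} (ht : t ≠ 0) :
    √(1 + t ^ 2) * ((1 + t ^ 2) * iteratedDeriv 3 (fun y => (arsinh y)⁻¹) t
        + 3 * t * iteratedDeriv 2 (fun y => (arsinh y)⁻¹) t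
        + deriv (fun y => (arsinh y)⁻¹) t) =
      -6 * (arsinh t)⁻¹ ^ 4 := by
  have pullback : (fun y => (arsinh y)⁻¹) ∘ sinh = Inv.inv := by
    funext a
    simp only [Function.comp_apply, arsinh_sinh]
  have faa_di_bruno := iteratedDeriv_three_comp_sinh (a := arsinh t)
    (by simpa only [sinh_arsinh] using contDiffAt_inv_arsinh ht)
  simp only [pullback, iteratedDeriv_three_inv, sinh_arsinh, cosh_arsinh,
    smul_eq_mul] at faa_di_bruno
  have sq_of_sqrt : √(1 + t ^ 2) ^ 2 = 1 + t ^ 2 := sq_sqrt (by positivity)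
  linear_combination -faa_di_bruno
    - √(1 + t ^ 2) * iteratedDeriv 3 (fun y => (arsinh y)⁻¹) t * sq_of_sqrt

theorem Lfun_eq_mul_inv : Lfun = fun t => t * (arsinh t)⁻¹ :=
  funext fun _ => div_eq_mul_inv _ _

theorem iteratedDeriv_succ_Lfun (n : ℕ) {t : ℝ} (ht : t ≠ 0) :
    iteratedDeriv (n + 1) Lfun t =
      t * iteratedDeriv (n + 1) (fun y => (arsinh y)⁻¹) t
        + (n + 1) * iteratedDeriv n (fun y => (arsinh y)⁻¹) t := by
  rw [Lfun_eq_mul_inv, iteratedDeriv_succ_fun_id_mul (contDiffAt_inv_arsinh ht)]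

theorem statement14 (t : ℝ) (ht : t ≠ 0) :
    Lfun t ^ 4 = (6 + t ^ 2) * Real.sqrt (1 + t ^ 2) / 6 * Lfun t
      - t * (6 + t ^ 2) * Real.sqrt (1 + t ^ 2) / 6 * deriv Lfun t
      + t ^ 2 * Real.sqrt (1 + t ^ 2) / 2 * iteratedDeriv 2 Lfun t
      - (t ^ 3 + t ^ 5) * Real.sqrt (1 + t ^ 2) / 6 * iteratedDeriv 3 Lfun t := by
  rw [← iteratedDeriv_one, iteratedDeriv_succ_Lfun 0 ht, iteratedDeriv_succ_Lfun 1 ht,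
    iteratedDeriv_succ_Lfun 2 ht, Lfun_eq_mul_inv]
  simp only [zero_add, Nat.reduceAdd, iteratedDeriv_zero, iteratedDeriv_one]
  push_cast
  linear_combination t ^ 4 / 6 * inv_arsinh_third_order_ode ht
end

section
/- For every integer n ≥ 1, T(n,2) = ((n-1)!)² · H^{(2)}_{n-1}, where H^{(2)}_{n-1} = ∑_{j=1}^{n-1} 1/j² is the generalized harmonic number of order 2 (with the empty sum equal to 0 when n = 1). -/
/-!
For `n ≥ 1`, dividing the recurrence by `(n!)²` gives
`T(n + 1, m + 1) / (n!)² = T(n, m) / (n!)² + T(n, m + 1) / ((n - 1)!)²`, which telescopes along the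
column `m + 1`. For `m = 1` the summands are `T(j, 1) / (j!)² = ((j - 1)! / j!)² = 1 / j²`.
-/

theorem T2_zero_succ (m : ℕ) : T2 0 (m + 1) = 0 := by
  rw [T2]

theorem T2_succ_zero (n : ℕ) : T2 (n + 1) 0 = 0 := by
  rw [T2]

theorem T2_succ_succ (n m : ℕ) : T2 (n + 1) (m + 1) = T2 n m + n ^ 2 * T2 n (m + 1) := by
  rw [T2]

theorem T2_succ_one (n : ℕ) : T2 (n + 1) 1 = n.factorial ^ 2 := by
  induction n with
  | zero => simp [T2]
  | succ n ih => rw [T2_succ_succ, T2_succ_zero, ih, zero_add, Nat.factorial_succ, mul_pow]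

section Semifield

variable {K : Type*} [Semifield K] [CharZero K]

theorem T2_succ_succ_eq_factorial_sq_mul_sum (n m : ℕ) :
    (T2 (n + 1) (m + 1) : K) =
      (n.factorial : K) ^ 2 * ∑ j ∈ Finset.range (n + 1), (T2 j m : K) / (j.factorial : K) ^ 2 := by
  induction n with
  | zero => simp [T2_succ_succ]
  | succ n ih =>
    have factorial_ne_zero : ((n + 1).factorial : K) ≠ 0 :=
      Nat.cast_ne_zero.mpr (n + 1).factorial_ne_zero
    rw [T2_succ_succ, Finset.sum_range_succ, mul_add,
      mul_div_cancel₀ _ (pow_ne_zero 2 factorial_ne_zero), Nat.factorial_succ]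
    push_cast
    rw [ih]
    ring

theorem T2_one_div_factorial_sq {j : ℕ} (hj : j ≠ 0) :
    (T2 j 1 : K) / (j.factorial : K) ^ 2 = 1 / (j : K) ^ 2 := by
  obtain ⟨k, rfl⟩ := Nat.exists_eq_succ_of_ne_zero hj
  have factorial_ne_zero : (k.factorial : K) ≠ 0 := Nat.cast_ne_zero.mpr k.factorial_ne_zero
  rw [Nat.succ_eq_add_one, T2_succ_one, Nat.factorial_succ, Nat.cast_pow, Nat.cast_mul, mul_pow,
    div_mul_cancel_right₀ (pow_ne_zero 2 factorial_ne_zero), one_div]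

theorem statement17_general (n : ℕ) (hn : 1 ≤ n) :
    (T2 n 2 : K) = (Nat.factorial (n - 1) : K) ^ 2 *
      ∑ j ∈ Finset.Icc 1 (n - 1), 1 / (j : K) ^ 2 := by
  obtain ⟨k, rfl⟩ := Nat.exists_eq_add_of_le' hn
  have sum_column_one : ∑ j ∈ Finset.range (k + 1), (T2 j 1 : K) / (j.factorial : K) ^ 2 =
      ∑ j ∈ Finset.Icc 1 k, 1 / (j : K) ^ 2 := by
    rw [Finset.range_eq_Ico, Finset.sum_eq_sum_Ico_succ_bot (Nat.add_one_pos k), T2_zero_succ,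
      Nat.cast_zero, zero_div, zero_add, zero_add, Finset.Ico_add_one_right_eq_Icc]
    exact Finset.sum_congr rfl fun j hj ↦
      T2_one_div_factorial_sq (Nat.one_le_iff_ne_zero.mp (Finset.mem_Icc.mp hj).1)
  rw [Nat.add_sub_cancel, T2_succ_succ_eq_factorial_sq_mul_sum, sum_column_one]

end Semifield

theorem statement17 (n : ℕ) (hn : 1 ≤ n) :
    (T2 n 2 : ℚ) = (Nat.factorial (n - 1) : ℚ) ^ 2 *
      ∑ j ∈ Finset.Icc 1 (n - 1), 1 / (j : ℚ) ^ 2 :=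
  statement17_general n hn
end
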